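/- arXiv:2212.12566 — 5 statements merged into one kernel-verified Lean document; each statement's English description precedes it below -/
import Mathlib

section
/- Let (h_n)_{n≥1} be a sequence of step functions on ℝ with h_n ≥ h_{n+1} ≥ 0 pointwise for all n and h_n(x) → 0 for every x ∈ ℝ. Then I(h_n) → 0, where I is the width integral on step functions. -/
open Filter Topology

/-- A bounded interval in ℝ: an order-convex, bounded-above and bounded-below subset. -/
def IsBoundedInterval (D : Set ℝ) : Prop :=
  D.OrdConnected ∧ BddAbove D ∧ BddBelow D

/-- A step function on ℝ: a finite real linear combination of indicator functions of
bounded intervals. -/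
def IsStepFun (f : ℝ → ℝ) : Prop :=
  f ∈ Submodule.span ℝ {g : ℝ → ℝ | ∃ D : Set ℝ, IsBoundedInterval D ∧ g = D.indicator 1}

/-! On step functions the width integral is the Lebesgue integral: both are linear, and they agree
on indicators of bounded intervals. Dominated convergence therefore applies; in the monotone case
the first function of the sequence dominates all the others. -/

open MeasureTheory Set

theorem IsBoundedInterval.isBounded {D : Set ℝ} (hD : IsBoundedInterval D) :
    Bornology.IsBounded D :=
  isBounded_iff_bddBelow_bddAbove.2 ⟨hD.2.2, hD.2.1⟩

theorem IsBoundedInterval.volume_real_eq {D : Set ℝ} (hD : IsBoundedInterval D) :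
    volume.real D = sSup D - sInf D := by
  obtain rfl | hne := D.eq_empty_or_nonempty
  · simp
  have volume_ne_top : volume D ≠ ⊤ := hD.isBounded.measure_lt_top.ne
  obtain ⟨hconn, habove, hbelow⟩ := hD
  have hle : sInf D ≤ sSup D := csInf_le_csSup hne hbelow habove
  apply le_antisymm
  · calc
      volume.real D ≤ volume.real (Icc (sInf D) (sSup D)) :=
        measureReal_mono (subset_Icc_csInf_csSup hbelow habove) measure_Icc_lt_top.ne
      _ = sSup D - sInf D := Real.volume_real_Icc_of_le hle
  · have connected : IsConnected D := ⟨hne, hconn.isPreconnected⟩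
    calc
      sSup D - sInf D = volume.real (Ioo (sInf D) (sSup D)) :=
        (Real.volume_real_Ioo_of_le hle).symm
      _ ≤ volume.real D :=
        measureReal_mono (connected.Ioo_csInf_csSup_subset hbelow habove) volume_ne_top

theorem IsBoundedInterval.integrable_indicator_one {D : Set ℝ} (hD : IsBoundedInterval D) :
    Integrable (D.indicator (1 : ℝ → ℝ)) :=
  (integrableOn_const hD.isBounded.measure_lt_top.ne).integrable_indicator hD.1.measurableSet

theorem IsBoundedInterval.integral_indicator_one {D : Set ℝ} (hD : IsBoundedInterval D) :
    ∫ x, D.indicator (1 : ℝ → ℝ) x = sSup D - sInf D := by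
  rw [MeasureTheory.integral_indicator_one hD.1.measurableSet, hD.volume_real_eq]

theorem IsStepFun.integrable {f : ℝ → ℝ} (hf : IsStepFun f) : Integrable f := by
  induction hf using Submodule.span_induction with
  | mem f hf =>
    obtain ⟨D, hD, rfl⟩ := hf
    exact hD.integrable_indicator_one
  | zero => exact integrable_zero ℝ ℝ volume
  | add f g _ _ hf hg => exact hf.add hg
  | smul c f _ hf => exact hf.smul c

theorem IsStepFun.width_integral_eq_integral {I : (ℝ → ℝ) →ₗ[ℝ] ℝ}
    (hI : ∀ D : Set ℝ, IsBoundedInterval D → I (D.indicator 1) = sSup D - sInf D)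
    {f : ℝ → ℝ} (hf : IsStepFun f) : I f = ∫ x, f x := by
  induction hf using Submodule.span_induction with
  | mem f hf =>
    obtain ⟨D, hD, rfl⟩ := hf
    rw [hI D hD, hD.integral_indicator_one]
  | zero => simp only [map_zero, Pi.zero_apply, integral_zero]
  | add f g hfs hgs hf hg =>
    rw [map_add, hf, hg, integral_add' (IsStepFun.integrable hfs) (IsStepFun.integrable hgs)]
  | smul c f _ hf => simp only [map_smul, hf, Pi.smul_apply, integral_smul]

theorem width_integral_monotone_continuity_general {I : (ℝ → ℝ) →ₗ[ℝ] ℝ}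
    (hI : ∀ D : Set ℝ, IsBoundedInterval D → I (D.indicator 1) = sSup D - sInf D)
    {ι : Type*} {l : Filter ι} [l.IsCountablyGenerated] {h : ι → ℝ → ℝ} {f : ℝ → ℝ}
    (bound : ℝ → ℝ) (hstep : ∀ᶠ i in l, IsStepFun (h i))
    (hbound : ∀ᶠ i in l, ∀ᵐ x, ‖h i x‖ ≤ bound x) (bound_integrable : Integrable bound)
    (hlim : ∀ᵐ x, Tendsto (fun i => h i x) l (𝓝 (f x))) :
    Tendsto (fun i => I (h i)) l (𝓝 (∫ x, f x)) := by
  have eq_integral : ∀ᶠ i in l, ∫ x, h i x = I (h i) :=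
    hstep.mono fun i hi => (hi.width_integral_eq_integral hI).symm
  have hmeas : ∀ᶠ i in l, AEStronglyMeasurable (h i) volume :=
    hstep.mono fun i hi => hi.integrable.aestronglyMeasurable
  exact (tendsto_integral_filter_of_dominated_convergence bound hmeas hbound
    bound_integrable hlim).congr' eq_integral

/-- Continuity of the width integral: if `I` is a linear functional assigning to the
indicator of each bounded interval its length (so `I` restricts to the width integral on
step functions), and `(h n)` is a sequence of step functions with
`h n ≥ h (n+1) ≥ 0` pointwise and `h n → 0` pointwise, then `I (h n) → 0`. -/
theorem width_integral_monotone_continuity (I : (ℝ → ℝ) →ₗ[ℝ] ℝ)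
    (hI : ∀ D : Set ℝ, IsBoundedInterval D → I (D.indicator 1) = sSup D - sInf D)
    (h : ℕ → ℝ → ℝ) (hstep : ∀ n, IsStepFun (h n))
    (hmono : ∀ n x, h (n + 1) x ≤ h n x)
    (hpos : ∀ n x, 0 ≤ h (n + 1) x)
    (hlim : ∀ x, Tendsto (fun n => h n x) atTop (𝓝 0)) :
    Tendsto (fun n => I (h n)) atTop (𝓝 0) := by
  have h_antitone : Antitone h := antitone_nat_of_succ_le hmono
  have norm_le (n : ℕ) (x : ℝ) : ‖h n x‖ ≤ h 0 x := by
    rw [Real.norm_of_nonneg ((hpos n x).trans (hmono n x))]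
    exact h_antitone n.zero_le x
  simpa only [integral_zero] using
    width_integral_monotone_continuity_general hI (h 0) (.of_forall hstep)
      (.of_forall fun n => .of_forall (norm_le n)) (hstep 0).integrable (.of_forall hlim)
end

section
/- Let φ : ℝ → ℝ be a monotone increasing function. Define the Stieltjes mass of bounded intervals by |(a,b)|_φ = φ(b−0) − φ(a+0) for a < b, |{c}|_φ = φ(c+0) − φ(c−0), and additively for half-open and closed intervals (so |[a,b]|_φ = φ(b+0) − φ(a−0), |(a,b]|_φ = φ(b+0) − φ(a+0), |[a,b)|_φ = φ(b−0) − φ(a−0)). If a bounded interval R is the union of a countable family (R_j)_{j≥1} of pairwise disjoint bounded intervals, then |R|_φ = Σ_{j=1}^∞ |R_j|_φ. -/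
open scoped Classical

/-- The Stieltjes mass of a bounded interval `D` with respect to an increasing function `φ`:
with `p = inf D` and `q = sup D`, it is
`(φ(q+0) or φ(q−0) according to whether q ∈ D or not) − (φ(p−0) or φ(p+0) according to
whether p ∈ D or not)`; the mass of the empty set is `0`.  This agrees with
`|(a,b)|_φ = φ(b−0) − φ(a+0)`, `|{c}|_φ = φ(c+0) − φ(c−0)`, `|[a,b]|_φ = φ(b+0) − φ(a−0)`,
`|(a,b]|_φ = φ(b+0) − φ(a+0)` and `|[a,b)|_φ = φ(b−0) − φ(a−0)`. -/
noncomputable def stieltjesMass (φ : ℝ → ℝ) (D : Set ℝ) : ℝ :=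
  if D.Nonempty then
    (if sSup D ∈ D then Function.rightLim φ (sSup D) else Function.leftLim φ (sSup D)) -
      (if sInf D ∈ D then Function.leftLim φ (sInf D) else Function.rightLim φ (sInf D))
  else 0

/-!
The right-continuous function `x ↦ φ(x+0)` defines a Stieltjes measure. Its left limits are those
of `φ`, so it gives every bounded interval `D` the measure `|D|_φ`; countable additivity of the mass
is thus countable additivity of that measure.
-/

open Set Function MeasureTheory Topology

section Mass

variable {φ : ℝ → ℝ} {a b : ℝ}

theorem stieltjesMass_empty : stieltjesMass φ ∅ = 0 := by
  simp [stieltjesMass]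

theorem stieltjesMass_Icc (hab : a ≤ b) :
    stieltjesMass φ (Icc a b) = rightLim φ b - leftLim φ a := by
  simp [stieltjesMass, hab]

theorem stieltjesMass_Ico (hab : a < b) :
    stieltjesMass φ (Ico a b) = leftLim φ b - leftLim φ a := by
  simp [stieltjesMass, hab]

theorem stieltjesMass_Ioc (hab : a < b) :
    stieltjesMass φ (Ioc a b) = rightLim φ b - rightLim φ a := by
  simp [stieltjesMass, hab]

theorem stieltjesMass_Ioo (hab : a < b) :
    stieltjesMass φ (Ioo a b) = leftLim φ b - rightLim φ a := by
  simp [stieltjesMass, hab]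

end Mass

theorem IsBoundedInterval.mem_intervals {D : Set ℝ} (hD : IsBoundedInterval D)
    (hne : D.Nonempty) :
    ∃ a b, D ∈ ({Icc a b, Ico a b, Ioc a b, Ioo a b} : Set (Set ℝ)) := by
  obtain ⟨hconn, habove, hbelow⟩ := hD
  have hD' : IsConnected D := ⟨hne, hconn.isPreconnected⟩
  exact ⟨sInf D, sSup D, mem_Icc_Ico_Ioc_Ioo_of_subset_of_subset
    (hD'.Ioo_csInf_csSup_subset hbelow habove) (subset_Icc_csInf_csSup hbelow habove)⟩

theorem leftLim_stieltjesFunction {α : Type*} [LinearOrder α] [TopologicalSpace α]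
    [OrderTopology α] {f : α → ℝ} (hf : Monotone f) (x : α) [(𝓝[<] x).NeBot] :
    leftLim hf.stieltjesFunction x = leftLim f x :=
  leftLim_rightLim (hf.tendsto_leftLim x)

theorem ofReal_stieltjesMass_eq_measure {φ : ℝ → ℝ} (hφ : Monotone φ) {D : Set ℝ}
    (hD : IsBoundedInterval D) :
    ENNReal.ofReal (stieltjesMass φ D) = hφ.stieltjesFunction.measure D := by
  rcases D.eq_empty_or_nonempty with rfl | hne
  · rw [stieltjesMass_empty, ENNReal.ofReal_zero, measure_empty]
  obtain ⟨a, b, rfl | rfl | rfl | rfl⟩ := hD.mem_intervals hne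
  · rw [stieltjesMass_Icc (nonempty_Icc.1 hne), StieltjesFunction.measure_Icc,
      leftLim_stieltjesFunction, hφ.stieltjesFunction_eq]
  · rw [stieltjesMass_Ico (nonempty_Ico.1 hne), StieltjesFunction.measure_Ico,
      leftLim_stieltjesFunction, leftLim_stieltjesFunction]
  · rw [stieltjesMass_Ioc (nonempty_Ioc.1 hne), StieltjesFunction.measure_Ioc,
      hφ.stieltjesFunction_eq, hφ.stieltjesFunction_eq]
  · rw [stieltjesMass_Ioo (nonempty_Ioo.1 hne), StieltjesFunction.measure_Ioo,
      leftLim_stieltjesFunction, hφ.stieltjesFunction_eq]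

theorem stieltjesMass_countably_additive_general {ι : Type*} [Countable ι] {φ : ℝ → ℝ}
    (hφ : Monotone φ) {R : Set ℝ} (hR : IsBoundedInterval R) {Rj : ι → Set ℝ}
    (hRj : ∀ j, IsBoundedInterval (Rj j)) (hdisj : Pairwise (Disjoint on Rj))
    (hunion : ⋃ j, Rj j = R) :
    ∑' j, ENNReal.ofReal (stieltjesMass φ (Rj j)) = ENNReal.ofReal (stieltjesMass φ R) :=
  calc
    ∑' j, ENNReal.ofReal (stieltjesMass φ (Rj j))
      = ∑' j, hφ.stieltjesFunction.measure (Rj j) :=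
        tsum_congr fun j ↦ ofReal_stieltjesMass_eq_measure hφ (hRj j)
    _ = hφ.stieltjesFunction.measure (⋃ j, Rj j) :=
        (measure_iUnion hdisj fun j ↦ (hRj j).1.measurableSet).symm
    _ = ENNReal.ofReal (stieltjesMass φ R) := by
        rw [hunion, ofReal_stieltjesMass_eq_measure hφ hR]

/-- Countable additivity of the Stieltjes mass: if a bounded interval `R` is the union of a
countable family of pairwise disjoint bounded intervals `R j`, then
`|R|_φ = Σ_j |R j|_φ` (the sum of the nonnegative series taken in `[0,∞]`). -/
theorem stieltjesMass_countably_additive (φ : ℝ → ℝ) (hφ : Monotone φ)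
    (R : Set ℝ) (hR : IsBoundedInterval R)
    (Rj : ℕ → Set ℝ) (hRj : ∀ j, IsBoundedInterval (Rj j))
    (hdisj : Pairwise (Function.onFun Disjoint Rj))
    (hunion : (⋃ j, Rj j) = R) :
    ∑' j, ENNReal.ofReal (stieltjesMass φ (Rj j)) = ENNReal.ofReal (stieltjesMass φ R) :=
  stieltjesMass_countably_additive_general hφ hR hRj hdisj hunion
end

section
/- Let −∞ ≤ a < b ≤ ∞ and let f : ℝ → [0,∞) be a function that vanishes outside the open interval (a,b) and whose restriction to (a,b) is continuous. Then there exists a sequence of step functions on ℝ increasing pointwise to f. -/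
open Filter Topology

/-!
At each point of `[-n, n]`, replace `f` by its infimum over the dyadic interval of length `2⁻ⁿ`
containing that point, and by `0` elsewhere. Dyadic intervals are nested, so these step functions
increase with `n`. As the interval containing `x` shrinks to `x`, lower semicontinuity of `f` at
`x` is what makes the infima converge to `f x`. A nonnegative function that is continuous on an
open set and zero elsewhere is lower semicontinuous everywhere, even if it jumps or blows up at
the boundary.
-/

section LowerSemicontinuous

variable {α β : Type*} [TopologicalSpace α]

lemma lowerSemicontinuous_of_continuousOn_of_notMem_le [LinearOrder β] [TopologicalSpace β]
    [OrderTopology β] {f : α → β} {s : Set α} (hs : IsOpen s) (hf : ContinuousOn f s)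
    (hmin : ∀ x ∉ s, ∀ y, f x ≤ f y) : LowerSemicontinuous f := by
  intro x
  by_cases hx : x ∈ s
  · exact (hf.continuousAt (hs.mem_nhds hx)).lowerSemicontinuousAt
  · exact fun c hc => .of_forall fun y => hc.trans_le (hmin x hx y)

lemma eventually_bddBelow_image_of_lowerSemicontinuousAt [LinearOrder β] {ι : Type*}
    {l : Filter ι} {f : α → β} {x : α} {s : ι → Set α} (hf : LowerSemicontinuousAt f x)
    (hs : Tendsto s l (𝓝 x).smallSets) : ∀ᶠ i in l, BddBelow (f '' s i) := by
  by_cases hbot : IsBot (f x)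
  · exact .of_forall fun i => ⟨f x, fun c _ => hbot c⟩
  · obtain ⟨c, hc⟩ : ∃ c, c < f x := by simpa only [IsBot, not_forall, not_le] using hbot
    filter_upwards [tendsto_smallSets_iff.1 hs _ (hf c hc)] with i hsub
    exact ⟨c, Set.forall_mem_image.2 fun y hy => (hsub hy).le⟩

lemma tendsto_sInf_image_of_lowerSemicontinuousAt [ConditionallyCompleteLinearOrder β]
    [TopologicalSpace β] [OrderTopology β] [DenselyOrdered β] {ι : Type*} {l : Filter ι}
    {f : α → β} {x : α} {s : ι → Set α} (hf : LowerSemicontinuousAt f x)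
    (hs : Tendsto s l (𝓝 x).smallSets) (hmem : ∀ᶠ i in l, x ∈ s i) :
    Tendsto (fun i => sInf (f '' s i)) l (𝓝 (f x)) := by
  refine tendsto_order.2 ⟨fun c hc => ?_, fun c hc => ?_⟩
  · obtain ⟨d, hcd, hd⟩ := exists_between hc
    filter_upwards [tendsto_smallSets_iff.1 hs _ (hf d hd), hmem] with i hsub hx
    have hd_le : d ≤ sInf (f '' s i) :=
      le_csInf ⟨f x, x, hx, rfl⟩ (Set.forall_mem_image.2 fun y hy => (hsub hy).le)
    exact hcd.trans_le hd_le
  · filter_upwards [eventually_bddBelow_image_of_lowerSemicontinuousAt hf hs, hmem] with i hbdd hx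
    exact (csInf_le hbdd ⟨x, hx, rfl⟩).trans_lt hc

end LowerSemicontinuous

lemma IsBoundedInterval.inter_preimage_singleton {ι : Type*} [PartialOrder ι] {J : Set ℝ}
    (hJ : IsBoundedInterval J) {φ : ℝ → ι} (hφ : Monotone φ) (k : ι) :
    IsBoundedInterval (J ∩ φ ⁻¹' {k}) :=
  ⟨hJ.1.inter (Set.ordConnected_singleton.preimage_mono hφ),
    hJ.2.1.mono Set.inter_subset_left, hJ.2.2.mono Set.inter_subset_left⟩

lemma IsBoundedInterval.isStepFun_indicator_comp {ι : Type*} [PartialOrder ι]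
    [LocallyFiniteOrder ι] {J : Set ℝ} (hJ : IsBoundedInterval J) {φ : ℝ → ι} (hφ : Monotone φ)
    (c : ι → ℝ) : IsStepFun (J.indicator (c ∘ φ)) := by
  classical
  obtain ⟨u, hu⟩ := hJ.2.1
  obtain ⟨l, hl⟩ := hJ.2.2
  have hsum : J.indicator (c ∘ φ) =
      ∑ k ∈ Finset.Icc (φ l) (φ u), c k • (J ∩ φ ⁻¹' {k}).indicator (1 : ℝ → ℝ) := by
    ext x
    by_cases hx : x ∈ J
    · have hφx : φ l ≤ φ x ∧ φ x ≤ φ u := ⟨hφ (hl hx), hφ (hu hx)⟩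
      simp [hx, hφx, Set.indicator_apply]
    · simp [hx]
  rw [hsum]
  exact Submodule.sum_mem _ fun k _ => Submodule.smul_mem _ _ <|
    Submodule.subset_span ⟨_, hJ.inter_preimage_singleton hφ k, rfl⟩

/-- The dyadic interval `[k / 2 ^ n, (k + 1) / 2 ^ n)`, with `k` an integer, that contains `x`. It
is encoded as a level set of `y ↦ ⌊2 ^ n * y⌋`. -/
def dyadicCell (n : ℕ) (x : ℝ) : Set ℝ :=
  {y | ⌊(2 : ℝ) ^ n * y⌋ = ⌊(2 : ℝ) ^ n * x⌋}

lemma mem_dyadicCell {n : ℕ} {x y : ℝ} :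
    y ∈ dyadicCell n x ↔ ⌊(2 : ℝ) ^ n * y⌋ = ⌊(2 : ℝ) ^ n * x⌋ :=
  Iff.rfl

lemma mem_dyadicCell_self (n : ℕ) (x : ℝ) : x ∈ dyadicCell n x :=
  rfl

lemma floor_two_pow_mul_eq_ediv_two (n : ℕ) (x : ℝ) :
    ⌊(2 : ℝ) ^ n * x⌋ = ⌊(2 : ℝ) ^ (n + 1) * x⌋ / 2 := by
  have h : (2 : ℝ) ^ n * x = 2 ^ (n + 1) * x / (2 : ℕ) := by
    push_cast
    ring
  rw [h, Int.floor_div_natCast, Nat.cast_ofNat]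

lemma antitone_dyadicCell (x : ℝ) : Antitone fun n => dyadicCell n x := by
  refine antitone_nat_of_succ_le fun n y hy => ?_
  rw [mem_dyadicCell, floor_two_pow_mul_eq_ediv_two, mem_dyadicCell.1 hy,
    ← floor_two_pow_mul_eq_ediv_two]

lemma dyadicCell_subset_ball (n : ℕ) (x : ℝ) : dyadicCell n x ⊆ Metric.ball x ((1 / 2) ^ n) := by
  intro y hy
  have hlt : |(2 : ℝ) ^ n * y - 2 ^ n * x| < 1 :=
    Int.abs_sub_lt_one_of_floor_eq_floor (mem_dyadicCell.1 hy)
  rw [← mul_sub, abs_mul, abs_of_pos (by positivity)] at hlt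
  rwa [Metric.mem_ball, Real.dist_eq, one_div_pow, lt_div_iff₀' (by positivity)]

lemma tendsto_dyadicCell_smallSets (x : ℝ) :
    Tendsto (fun n => dyadicCell n x) atTop (𝓝 x).smallSets := by
  have hbasis := Metric.nhds_basis_ball_pow (x := x) one_half_pos one_half_lt_one
  refine tendsto_smallSets_iff.2 fun t ht => ?_
  obtain ⟨N, -, hN⟩ := hbasis.mem_iff.1 ht
  filter_upwards [eventually_ge_atTop N] with n hn
  exact (antitone_dyadicCell x hn).trans ((dyadicCell_subset_ball N x).trans hN)

/-- The lower dyadic approximation of `f` at level `n`: on `[-n, n]` the infimum of `f` over the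
dyadic cell of each point, and `0` elsewhere. The infimum is taken over whole cells, including any
part outside `[-n, n]`, so on `[-n, n]` it depends only on the cell. -/
noncomputable def lowerDyadicStep (f : ℝ → ℝ) (n : ℕ) : ℝ → ℝ :=
  (Set.Icc (-n : ℝ) n).indicator fun x => sInf (f '' dyadicCell n x)

lemma isStepFun_lowerDyadicStep (f : ℝ → ℝ) (n : ℕ) : IsStepFun (lowerDyadicStep f n) := by
  have hJ : IsBoundedInterval (Set.Icc (-n : ℝ) n) :=
    ⟨Set.ordConnected_Icc, bddAbove_Icc, bddBelow_Icc⟩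
  have hfloor : Monotone fun x : ℝ => ⌊(2 : ℝ) ^ n * x⌋ :=
    Int.floor_mono.comp (monotone_id.const_mul (by positivity))
  exact hJ.isStepFun_indicator_comp hfloor fun k => sInf (f '' {y | ⌊(2 : ℝ) ^ n * y⌋ = k})

lemma monotone_lowerDyadicStep {f : ℝ → ℝ} (hf : ∀ x, 0 ≤ f x) :
    Monotone (lowerDyadicStep f) := by
  intro m n hmn x
  have hmn' : (m : ℝ) ≤ n := Nat.cast_le.2 hmn
  have hbdd : BddBelow (f '' dyadicCell m x) := ⟨0, Set.forall_mem_image.2 fun y _ => hf y⟩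
  calc
    lowerDyadicStep f m x
      ≤ (Set.Icc (-m : ℝ) m).indicator (fun y => sInf (f '' dyadicCell n y)) x :=
        Set.indicator_le_indicator <| csInf_le_csInf hbdd ⟨f x, x, mem_dyadicCell_self n x, rfl⟩ <|
          Set.image_mono (antitone_dyadicCell x hmn)
    _ ≤ lowerDyadicStep f n x :=
        Set.indicator_le_indicator_of_subset (Set.Icc_subset_Icc (neg_le_neg hmn') hmn')
          (fun _ => Real.sInf_nonneg (Set.forall_mem_image.2 fun y _ => hf y)) x

lemma tendsto_lowerDyadicStep {f : ℝ → ℝ} {x : ℝ} (hf : LowerSemicontinuousAt f x) :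
    Tendsto (fun n => lowerDyadicStep f n x) atTop (𝓝 (f x)) := by
  have hinf : Tendsto (fun n => sInf (f '' dyadicCell n x)) atTop (𝓝 (f x)) :=
    tendsto_sInf_image_of_lowerSemicontinuousAt hf (tendsto_dyadicCell_smallSets x)
      (.of_forall fun n => mem_dyadicCell_self n x)
  refine hinf.congr' ?_
  filter_upwards [tendsto_natCast_atTop_atTop.eventually_ge_atTop |x|] with n hn
  have hx : x ∈ Set.Icc (-n : ℝ) n := abs_le.1 hn
  rw [lowerDyadicStep, Set.indicator_of_mem hx]

theorem exists_stepFun_seq_tendsto_general (f : ℝ → ℝ) (hf0 : ∀ x, 0 ≤ f x)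
    (hf : LowerSemicontinuous f) :
    ∃ g : ℕ → ℝ → ℝ, (∀ n, IsStepFun (g n)) ∧ (∀ n x, g n x ≤ g (n + 1) x) ∧
      ∀ x, Tendsto (fun n => g n x) atTop (𝓝 (f x)) :=
  ⟨lowerDyadicStep f, isStepFun_lowerDyadicStep f,
    fun n => monotone_lowerDyadicStep hf0 n.le_succ,
    fun x => tendsto_lowerDyadicStep (hf x)⟩

/-- Let `−∞ ≤ a < b ≤ ∞` and let `f : ℝ → [0,∞)` vanish outside the open interval `(a,b)`
and be continuous on `(a,b)`.  Then some sequence of step functions increases pointwise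
to `f`. -/
theorem exists_stepFun_seq_tendsto (a b : EReal) (hab : a < b) (f : ℝ → ℝ)
    (hf0 : ∀ x, 0 ≤ f x)
    (hsupp : ∀ x : ℝ, ¬(a < (x : EReal) ∧ (x : EReal) < b) → f x = 0)
    (hcont : ContinuousOn f {x : ℝ | a < (x : EReal) ∧ (x : EReal) < b}) :
    ∃ g : ℕ → ℝ → ℝ, (∀ n, IsStepFun (g n)) ∧ (∀ n x, g n x ≤ g (n + 1) x) ∧
      ∀ x, Tendsto (fun n => g n x) atTop (𝓝 (f x)) := by
  have hlsc : LowerSemicontinuous f := lowerSemicontinuous_of_continuousOn_of_notMem_le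
    (isOpen_Ioo.preimage continuous_coe_real_ereal) hcont
      fun x hx y => (hsupp x hx).trans_le (hf0 y)
  exact exists_stepFun_seq_tendsto_general f hf0 hlsc
end

section
/- Let f : ℝ → ℝ be bounded, vanish outside some bounded set, and be continuous at all but finitely many points of ℝ. Then there exist a sequence of step functions on ℝ increasing pointwise to f and a sequence of step functions on ℝ decreasing pointwise to f. -/
open Filter Topology

/-!
Fix a countable set `S` of cut points that is dense and contains every discontinuity of `f`, and
exhaust it by finite sets `P 0 ⊆ P 1 ⊆ ⋯`. Each `P n` cuts `ℝ` into finitely many cells, namely its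
points and the open intervals between them. Replacing `f` on every cell by its infimum gives a step
function below `f`, and refining the cells increases it. At a cut point the value is eventually
exact; at any other point the cells shrink to the point by density, so lower semicontinuity there
gives convergence. The decreasing sequence comes from `-f`.
-/

section FiberInf

variable {α β ι ι' : Type*} {x : α}

section Lattice

variable [ConditionallyCompleteLattice β] {L : α → ι} {f : α → β}

/-- The infimum of `f` over the fiber of `L` at `i`. The lower approximation of `f` that is
constant on the fibers of `L` is `fiberInf L f ∘ L`. -/
def fiberInf (L : α → ι) (f : α → β) (i : ι) : β :=
  sInf (f '' (L ⁻¹' {i}))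

theorem fiberInf_le (hf : BddBelow (Set.range f)) : fiberInf L f (L x) ≤ f x :=
  csInf_le (hf.mono (Set.image_subset_range f _)) ⟨x, rfl, rfl⟩

theorem le_fiberInf {c : β} (h : ∀ y, L y = L x → c ≤ f y) : c ≤ fiberInf L f (L x) :=
  le_csInf ⟨f x, x, rfl, rfl⟩ (Set.forall_mem_image.2 h)

theorem fiberInf_eq_of_forall_eq {c : β} (h : ∀ y, L y = L x → f y = c) :
    fiberInf L f (L x) = c := by
  have himage : f '' (L ⁻¹' {L x}) = {c} :=
    Set.eq_singleton_iff_nonempty_unique_mem.2 ⟨⟨f x, x, rfl, rfl⟩, Set.forall_mem_image.2 h⟩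
  rw [fiberInf, himage, csInf_singleton]

theorem fiberInf_le_fiberInf_of_refines {L' : α → ι'} (hf : BddBelow (Set.range f))
    (h : ∀ y, L' y = L' x → L y = L x) : fiberInf L f (L x) ≤ fiberInf L' f (L' x) :=
  le_fiberInf fun y hy => h y hy ▸ fiberInf_le hf

end Lattice

theorem tendsto_fiberInf [ConditionallyCompleteLinearOrder β] [DenselyOrdered β]
    [TopologicalSpace β] [OrderTopology β] {l : Filter ι'} {L : ι' → α → ι} {f : α → β}
    (hf : BddBelow (Set.range f))
    (h : ∀ c < f x, ∀ᶠ n in l, ∀ y, L n y = L n x → c < f y) :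
    Tendsto (fun n => fiberInf (L n) f (L n x)) l (𝓝 (f x)) := by
  refine tendsto_order.2 ⟨fun a ha => ?_,
    fun b hb => .of_forall fun n => (fiberInf_le hf).trans_lt hb⟩
  obtain ⟨c, hac, hcx⟩ := exists_between ha
  filter_upwards [h c hcx] with n hn
  exact hac.trans_le (le_fiberInf fun y hy => (hn y hy).le)

end FiberInf

section CutLabel

variable {α κ : Type*}

section Preorder

variable [Preorder α] {P Q : Set α} {x y p : α}

/-- The position of `x` relative to the cut points `P`: the cut points before `x`, strictly and
weakly. In a linear order the fibers are the cells of `P`, i.e. the points of `P` and the maximal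
order-convex sets avoiding `P`. The codomain is ordered by inclusion, which makes `cutLabel P`
monotone. -/
def cutLabel (P : Set α) (x : α) : Set α × Set α :=
  (P ∩ Set.Iio x, P ∩ Set.Iic x)

theorem cutLabel_monotone (P : Set α) : Monotone (cutLabel P) := fun _ _ h =>
  ⟨Set.inter_subset_inter_right P (Set.Iio_subset_Iio h),
    Set.inter_subset_inter_right P (Set.Iic_subset_Iic.2 h)⟩

theorem finite_range_cutLabel (hP : P.Finite) : (Set.range (cutLabel P)).Finite :=
  (hP.finite_subsets.prod hP.finite_subsets).subset <| Set.range_subset_iff.2 fun _ =>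
    ⟨Set.inter_subset_left, Set.inter_subset_left⟩

theorem cutLabel_eq_iff :
    cutLabel P x = cutLabel P y ↔ ∀ p ∈ P, (p < x ↔ p < y) ∧ (p ≤ x ↔ p ≤ y) := by
  simp only [cutLabel, Prod.ext_iff, Set.ext_iff, Set.mem_inter_iff, Set.mem_Iio, Set.mem_Iic,
    and_congr_right_iff, forall_and]

theorem cutLabel_eq_of_subset (hPQ : P ⊆ Q) (h : cutLabel Q x = cutLabel Q y) :
    cutLabel P x = cutLabel P y :=
  cutLabel_eq_iff.2 fun p hp => cutLabel_eq_iff.1 h p (hPQ hp)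

theorem cutPoint_lt_iff_of_cutLabel_eq (h : cutLabel P x = cutLabel P y) (hp : p ∈ P) :
    p < x ↔ p < y :=
  (cutLabel_eq_iff.1 h p hp).1

end Preorder

variable [LinearOrder α] {P : Set α} {x y p : α}

theorem lt_cutPoint_iff_of_cutLabel_eq (h : cutLabel P x = cutLabel P y) (hp : p ∈ P) :
    x < p ↔ y < p := by
  simpa only [not_le] using (cutLabel_eq_iff.1 h p hp).2.not

theorem eq_of_cutLabel_eq_of_mem (h : cutLabel P y = cutLabel P x) (hx : x ∈ P) : y = x :=
  le_antisymm (not_lt.1 fun hxy => lt_irrefl x ((cutPoint_lt_iff_of_cutLabel_eq h hx).1 hxy))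
    (not_lt.1 fun hyx => lt_irrefl x ((lt_cutPoint_iff_of_cutLabel_eq h hx).1 hyx))

theorem tendsto_cutLabel_fiber_smallSets [TopologicalSpace α] [OrderTopology α] [DenselyOrdered α]
    [NoMinOrder α] [NoMaxOrder α] {l : Filter κ} {P : κ → Set α} {S : Set α} (hS : Dense S)
    (hP : ∀ p ∈ S, ∀ᶠ n in l, p ∈ P n) (x : α) :
    Tendsto (fun n => cutLabel (P n) ⁻¹' {cutLabel (P n) x}) l (𝓝 x).smallSets := by
  refine tendsto_smallSets_iff.2 fun t ht => ?_
  obtain ⟨a, b, ⟨hax, hxb⟩, hab⟩ := mem_nhds_iff_exists_Ioo_subset.1 ht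
  obtain ⟨p, hpS, hap, hpx⟩ := hS.exists_between hax
  obtain ⟨q, hqS, hxq, hqb⟩ := hS.exists_between hxb
  filter_upwards [hP p hpS, hP q hqS] with n hpn hqn y hy
  exact hab ⟨hap.trans ((cutPoint_lt_iff_of_cutLabel_eq hy hpn).2 hpx),
    ((lt_cutPoint_iff_of_cutLabel_eq hy hqn).2 hxq).trans hqb⟩

theorem support_fiberInf_cutLabel_subset {β : Type*} [ConditionallyCompleteLattice β] [Zero β]
    {f : α → β} {a b : α} (hsupp : Function.support f ⊆ Set.Icc a b) (ha : a ∈ P) (hb : b ∈ P) :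
    Function.support (fiberInf (cutLabel P) f ∘ cutLabel P) ⊆ Set.Icc a b := by
  refine Function.support_subset_iff'.2 fun x hx => fiberInf_eq_of_forall_eq fun y hy => ?_
  refine Function.support_subset_iff'.1 hsupp y fun hyab => hx ?_
  exact ⟨not_lt.1 fun h => hyab.1.not_gt ((lt_cutPoint_iff_of_cutLabel_eq hy ha).2 h),
    not_lt.1 fun h => hyab.2.not_gt ((cutPoint_lt_iff_of_cutLabel_eq hy hb).2 h)⟩

end CutLabel

theorem exists_monotone_finite_seq {α : Type*} [Nonempty α] {F S : Set α} (hF : F.Finite)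
    (hS : S.Countable) :
    ∃ P : ℕ → Set α, Monotone P ∧ (∀ n, (P n).Finite) ∧ (∀ n, F ⊆ P n) ∧
      ∀ p ∈ S, ∀ᶠ n in atTop, p ∈ P n := by
  obtain ⟨u, hu⟩ := Set.countable_iff_exists_subset_range.1 hS
  refine ⟨fun n => F ∪ u '' Set.Iio n,
    fun m n h => Set.union_subset_union_right F (Set.image_mono (Set.Iio_subset_Iio h)),
    fun n => hF.union ((Set.finite_Iio n).image u), fun n => Set.subset_union_left, fun p hp => ?_⟩
  obtain ⟨m, rfl⟩ := hu hp
  filter_upwards [eventually_gt_atTop m] with n hn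
  exact Or.inr ⟨m, hn, rfl⟩

theorem isBoundedInterval_inter_Icc {D : Set ℝ} (hD : D.OrdConnected) (a b : ℝ) :
    IsBoundedInterval (D ∩ Set.Icc a b) :=
  ⟨hD.inter Set.ordConnected_Icc, bddAbove_Icc.mono Set.inter_subset_right,
    bddBelow_Icc.mono Set.inter_subset_right⟩

theorem isStepFun_comp_of_monotone {ι : Type*} [PartialOrder ι] {L : ℝ → ι} (hL : Monotone L)
    (hfin : (Set.range L).Finite) {c : ι → ℝ} {a b : ℝ}
    (hsupp : Function.support (c ∘ L) ⊆ Set.Icc a b) : IsStepFun (c ∘ L) := by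
  have hsum : c ∘ L = ∑ i ∈ hfin.toFinset, c i • (L ⁻¹' {i} ∩ Set.Icc a b).indicator 1 := by
    funext x
    rw [Finset.sum_apply, Finset.sum_eq_single_of_mem (L x) (by simp)
      fun i _ hi => by simp [Set.indicator, hi.symm]]
    by_cases hx : x ∈ Set.Icc a b
    · simp [Set.indicator, hx.1, hx.2]
    · have hzero : c (L x) = 0 := Function.notMem_support.1 fun h => hx (hsupp h)
      simp [hzero]
  rw [IsStepFun, hsum]
  exact Submodule.sum_mem _ fun i _ => Submodule.smul_mem _ _ <| Submodule.subset_span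
    ⟨_, isBoundedInterval_inter_Icc (Set.ordConnected_singleton.preimage_mono hL) a b, rfl⟩

theorem exists_monotone_stepFun_seq {f : ℝ → ℝ} {a b : ℝ} (hf : BddBelow (Set.range f))
    (hsupp : Function.support f ⊆ Set.Icc a b)
    (hlsc : {x | ¬LowerSemicontinuousAt f x}.Countable) :
    ∃ g : ℕ → ℝ → ℝ, (∀ n, IsStepFun (g n)) ∧ Monotone g ∧
      ∀ x, Tendsto (fun n => g n x) atTop (𝓝 (f x)) := by
  obtain ⟨D, hD, hDdense⟩ := TopologicalSpace.exists_countable_dense ℝ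
  obtain ⟨P, hPmono, hPfin, hab, hP⟩ :=
    exists_monotone_finite_seq (Set.toFinite {a, b}) (hlsc.union hD)
  refine ⟨fun n => fiberInf (cutLabel (P n)) f ∘ cutLabel (P n), fun n => ?_, fun m n h x => ?_,
    fun x => tendsto_fiberInf hf fun c hc => ?_⟩
  · exact isStepFun_comp_of_monotone (cutLabel_monotone _) (finite_range_cutLabel (hPfin n))
      (support_fiberInf_cutLabel_subset hsupp (hab n (.inl rfl)) (hab n (.inr rfl)))
  · exact fiberInf_le_fiberInf_of_refines hf fun y => cutLabel_eq_of_subset (hPmono h)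
  · by_cases hx : LowerSemicontinuousAt f x
    · have hcells := tendsto_cutLabel_fiber_smallSets hDdense (fun p hp => hP p (.inr hp)) x
      exact tendsto_smallSets_iff.1 hcells _ (hx c hc)
    · filter_upwards [hP x (.inl hx)] with n hn y hy
      rwa [eq_of_cutLabel_eq_of_mem hy hn]

theorem exists_antitone_stepFun_seq {f : ℝ → ℝ} {a b : ℝ} (hf : BddAbove (Set.range f))
    (hsupp : Function.support f ⊆ Set.Icc a b)
    (husc : {x | ¬UpperSemicontinuousAt f x}.Countable) :
    ∃ g : ℕ → ℝ → ℝ, (∀ n, IsStepFun (g n)) ∧ Antitone g ∧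
      ∀ x, Tendsto (fun n => g n x) atTop (𝓝 (f x)) := by
  have hlsc : {x | ¬LowerSemicontinuousAt (-f) x}.Countable := by
    simpa using husc
  have hbdd : BddBelow (Set.range (-f)) := by
    obtain ⟨M, hM⟩ := hf
    exact ⟨-M, Set.forall_mem_range.2 fun x => neg_le_neg (hM ⟨x, rfl⟩)⟩
  obtain ⟨g, hstep, hmono, hlim⟩ :=
    exists_monotone_stepFun_seq hbdd (by rwa [Function.support_neg]) hlsc
  exact ⟨-g, fun n => Submodule.neg_mem _ (hstep n), hmono.neg,
    fun x => by simpa using (hlim x).neg⟩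

theorem exists_stepFun_seq_up_down_general (f : ℝ → ℝ)
    (hbd : ∃ M : ℝ, ∀ x, |f x| ≤ M)
    (hsupp : ∃ R : ℝ, ∀ x, R < |x| → f x = 0)
    (hcont : {x | ¬ContinuousAt f x}.Countable) :
    (∃ g : ℕ → ℝ → ℝ, (∀ n, IsStepFun (g n)) ∧ (∀ n x, g n x ≤ g (n + 1) x) ∧
      ∀ x, Tendsto (fun n => g n x) atTop (𝓝 (f x))) ∧
    (∃ g : ℕ → ℝ → ℝ, (∀ n, IsStepFun (g n)) ∧ (∀ n x, g (n + 1) x ≤ g n x) ∧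
      ∀ x, Tendsto (fun n => g n x) atTop (𝓝 (f x))) := by
  obtain ⟨M, hM⟩ := hbd
  obtain ⟨R, hR⟩ := hsupp
  have hbelow : BddBelow (Set.range f) :=
    ⟨-M, Set.forall_mem_range.2 fun x => neg_le_of_abs_le (hM x)⟩
  have habove : BddAbove (Set.range f) :=
    ⟨M, Set.forall_mem_range.2 fun x => le_of_abs_le (hM x)⟩
  have hIcc : Function.support f ⊆ Set.Icc (-R) R :=
    fun x hx => abs_le.1 (not_lt.1 fun h => hx (hR x h))
  obtain ⟨g, hg, hg_mono, hg_lim⟩ := exists_monotone_stepFun_seq hbelow hIcc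
    (hcont.mono fun x => mt ContinuousAt.lowerSemicontinuousAt)
  obtain ⟨h, hh, hh_anti, hh_lim⟩ := exists_antitone_stepFun_seq habove hIcc
    (hcont.mono fun x => mt ContinuousAt.upperSemicontinuousAt)
  exact ⟨⟨g, hg, fun n => hg_mono n.le_succ, hg_lim⟩, ⟨h, hh, fun n => hh_anti n.le_succ, hh_lim⟩⟩

/-- If `f : ℝ → ℝ` is bounded, vanishes outside a bounded set, and is continuous except at
finitely many points, then there are a sequence of step functions increasing pointwise to `f`
and a sequence of step functions decreasing pointwise to `f`. -/
theorem exists_stepFun_seq_up_down (f : ℝ → ℝ)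
    (hbd : ∃ M : ℝ, ∀ x, |f x| ≤ M)
    (hsupp : ∃ R : ℝ, ∀ x, R < |x| → f x = 0)
    (hcont : ∃ E : Finset ℝ, ∀ x ∉ E, ContinuousAt f x) :
    (∃ g : ℕ → ℝ → ℝ, (∀ n, IsStepFun (g n)) ∧ (∀ n x, g n x ≤ g (n + 1) x) ∧
      ∀ x, Tendsto (fun n => g n x) atTop (𝓝 (f x))) ∧
    (∃ g : ℕ → ℝ → ℝ, (∀ n, IsStepFun (g n)) ∧ (∀ n x, g (n + 1) x ≤ g n x) ∧
      ∀ x, Tendsto (fun n => g n x) atTop (𝓝 (f x))) := by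
  obtain ⟨E, hE⟩ := hcont
  exact exists_stepFun_seq_up_down_general f hbd hsupp
    (E.countable_toSet.mono fun x hx => by_contra fun hxE => hx (hE x hxE))
end

section
/- Let (L, I) be an integral system on a set X and let (f_n) and (g_n) be increasing sequences in L such that lim_n f_n(x) ≤ lim_n g_n(x) for every x ∈ X, the limits being taken in (−∞,∞]. Then lim_n I(f_n) ≤ lim_n I(g_n) in (−∞,∞]. -/
open Filter Topology

/-- An integral system on a set `X`: a linear lattice `L` of real-valued functions on `X`
(a vector subspace of `ℝ^X` closed under pointwise max and min) together with a
preintegral `I` on it (a positive linear functional that is continuous in the sense that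
`I fₙ → 0` whenever `fₙ ∈ L` are nonnegative and decrease pointwise to `0`). -/
structure IntegralSystem (X : Type*) where
  L : Set (X → ℝ)
  I : (X → ℝ) → ℝ
  zero_mem : (0 : X → ℝ) ∈ L
  add_mem : ∀ ⦃f g : X → ℝ⦄, f ∈ L → g ∈ L → f + g ∈ L
  smul_mem : ∀ (c : ℝ) ⦃f : X → ℝ⦄, f ∈ L → c • f ∈ L
  sup_mem : ∀ ⦃f g : X → ℝ⦄, f ∈ L → g ∈ L → f ⊔ g ∈ L
  inf_mem : ∀ ⦃f g : X → ℝ⦄, f ∈ L → g ∈ L → f ⊓ g ∈ L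
  I_add : ∀ ⦃f g : X → ℝ⦄, f ∈ L → g ∈ L → I (f + g) = I f + I g
  I_smul : ∀ (c : ℝ) ⦃f : X → ℝ⦄, f ∈ L → I (c • f) = c * I f
  I_pos : ∀ ⦃f : X → ℝ⦄, f ∈ L → (∀ x, 0 ≤ f x) → 0 ≤ I f
  I_cont : ∀ f : ℕ → X → ℝ, (∀ n, f n ∈ L) → (∀ n x, 0 ≤ f n x) →
    (∀ n x, f (n + 1) x ≤ f n x) →
    (∀ x, Tendsto (fun n => f n x) atTop (𝓝 0)) →
    Tendsto (fun n => I (f n)) atTop (𝓝 0)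

variable {X : Type*}

/-- `f : X → (−∞,∞]` belongs to `L_↑` iff some sequence in `L` increases pointwise to `f`. -/
def MemLup (S : IntegralSystem X) (f : X → EReal) : Prop :=
  ∃ g : ℕ → X → ℝ, (∀ n, g n ∈ S.L) ∧ (∀ n x, g n x ≤ g (n + 1) x) ∧
    ∀ x, Tendsto (fun n => ((g n x : EReal))) atTop (𝓝 (f x))

/-- For `f ∈ L_↑`, `I_↑ f = lim I (g n)` for any sequence `(g n)` in `L` increasing
pointwise to `f`; the value does not depend on the chosen sequence, so we may define it as
the supremum of all such limits. -/
noncomputable def Iup (S : IntegralSystem X) (f : X → EReal) : EReal :=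
  sSup { c : EReal | ∃ g : ℕ → X → ℝ, (∀ n, g n ∈ S.L) ∧ (∀ n x, g n x ≤ g (n + 1) x) ∧
    (∀ x, Tendsto (fun n => ((g n x : EReal))) atTop (𝓝 (f x))) ∧
    Tendsto (fun n => ((S.I (g n) : EReal))) atTop (𝓝 c) }

/-- `L_↓ = −L_↑`. -/
def MemLdown (S : IntegralSystem X) (f : X → EReal) : Prop :=
  MemLup S (fun x => -(f x))

/-- `I_↓ f = −I_↑(−f)`. -/
noncomputable def Idown (S : IntegralSystem X) (f : X → EReal) : EReal :=
  -(Iup S (fun x => -(f x)))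

/-- The upper integral `Ī f = inf { I_↑ g : g ∈ L_↑, f ≤ g }` (with `inf ∅ = ∞`). -/
noncomputable def upperInt (S : IntegralSystem X) (f : X → EReal) : EReal :=
  sInf (Iup S '' { g | MemLup S g ∧ ∀ x, f x ≤ g x })

/-- The lower integral `I̲ f = sup { I_↓ g : g ∈ L_↓, g ≤ f }` (with `sup ∅ = −∞`). -/
noncomputable def lowerInt (S : IntegralSystem X) (f : X → EReal) : EReal :=
  sSup (Idown S '' { g | MemLdown S g ∧ ∀ x, g x ≤ f x })

/-- `f : X → ℝ` is `I`-integrable iff its lower and upper integrals coincide and are finite. -/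
def Integrable1 (S : IntegralSystem X) (f : X → ℝ) : Prop :=
  ∃ c : ℝ, lowerInt S (fun x => ((f x : EReal))) = (c : EReal) ∧
    upperInt S (fun x => ((f x : EReal))) = (c : EReal)

/-- The Daniell extension `I¹` of `I`: the common value of the lower and upper integrals of
an integrable function. -/
noncomputable def Int1 (S : IntegralSystem X) (f : X → ℝ) : ℝ :=
  (upperInt S (fun x => ((f x : EReal)))).toReal

/-!
Fix `m`. Since `f m ≤ lim g n`, the truncations `f m ⊓ g n` increase pointwise to the real-valued
function `f m`, so the continuity of the preintegral applies to the decreasing differences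
`f m - f m ⊓ g n` and gives `I (f m ⊓ g n) → I (f m)`. As `I (f m ⊓ g n) ≤ I (g n)`, this yields
`I (f m) ≤ lim I (g n)`, and it remains to let `m → ∞`.
-/

theorem tendsto_min_of_tendsto_coe_ereal {ι : Type*} {l : Filter ι} {u : ι → ℝ} {c : ℝ} {y : EReal}
    (hu : Tendsto (fun i => (u i : EReal)) l (𝓝 y)) (hcy : (c : EReal) ≤ y) :
    Tendsto (fun i => min c (u i)) l (𝓝 c) := by
  have hmin : Tendsto (fun i => min (c : EReal) (u i)) l (𝓝 (min (c : EReal) y)) :=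
    tendsto_const_nhds.min hu
  rw [min_eq_left hcy] at hmin
  exact EReal.tendsto_coe.1 (by simpa only [EReal.coe_strictMono.monotone.map_min] using hmin)

namespace IntegralSystem

variable (S : IntegralSystem X) {f g : X → ℝ}

theorem sub_mem (hf : f ∈ S.L) (hg : g ∈ S.L) : f - g ∈ S.L := by
  simpa only [neg_one_smul, ← sub_eq_add_neg] using S.add_mem hf (S.smul_mem (-1) hg)

theorem I_sub (hf : f ∈ S.L) (hg : g ∈ S.L) : S.I (f - g) = S.I f - S.I g := by
  rw [eq_sub_iff_add_eq, ← S.I_add (S.sub_mem hf hg) hg, sub_add_cancel]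

theorem I_mono (hf : f ∈ S.L) (hg : g ∈ S.L) (hfg : f ≤ g) : S.I f ≤ S.I g := by
  rw [← sub_nonneg, ← S.I_sub hg hf]
  exact S.I_pos (S.sub_mem hg hf) fun x => sub_nonneg.2 (hfg x)

theorem tendsto_I_of_monotone {u : ℕ → X → ℝ} (hu : ∀ n, u n ∈ S.L) (hf : f ∈ S.L)
    (hmono : Monotone u) (hlim : Tendsto u atTop (𝓝 f)) :
    Tendsto (fun n => S.I (u n)) atTop (𝓝 (S.I f)) := by
  have hdiff : Tendsto (fun n => S.I (f - u n)) atTop (𝓝 0) := by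
    refine S.I_cont (fun n => f - u n) (fun n => S.sub_mem hf (hu n))
      (fun n x => sub_nonneg.2 (hmono.ge_of_tendsto hlim n x))
      (fun n x => sub_le_sub_left (hmono n.le_succ x) (f x)) fun x => ?_
    simpa only [Pi.sub_apply, sub_self] using (tendsto_pi_nhds.1 hlim x).const_sub (f x)
  simpa only [S.I_sub hf (hu _), sub_sub_cancel, sub_zero] using hdiff.const_sub (S.I f)

theorem I_le_of_tendsto_of_le {u : ℕ → X → ℝ} {G : X → EReal} {b : EReal} (hf : f ∈ S.L)
    (hu : ∀ n, u n ∈ S.L) (hmono : Monotone u)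
    (hG : ∀ x, Tendsto (fun n => (u n x : EReal)) atTop (𝓝 (G x)))
    (hfG : ∀ x, (f x : EReal) ≤ G x)
    (hb : Tendsto (fun n => (S.I (u n) : EReal)) atTop (𝓝 b)) :
    (S.I f : EReal) ≤ b := by
  have hinf (n : ℕ) : f ⊓ u n ∈ S.L := S.inf_mem hf (hu n)
  have htrunc : Tendsto (fun n => S.I (f ⊓ u n)) atTop (𝓝 (S.I f)) :=
    S.tendsto_I_of_monotone hinf hf (fun _ _ hmn => inf_le_inf_left f (hmono hmn))
      (tendsto_pi_nhds.2 fun x => tendsto_min_of_tendsto_coe_ereal (hG x) (hfG x))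
  exact le_of_tendsto_of_tendsto' (EReal.tendsto_coe.2 htrunc) hb fun n =>
    EReal.coe_le_coe_iff.2 (S.I_mono (hinf n) (hu n) inf_le_right)

end IntegralSystem

/-- If increasing sequences `(f n)` and `(g n)` in `L` have pointwise limits `F ≤ G`
(limits taken in `(−∞,∞]`), then `lim I (f n) ≤ lim I (g n)` in `(−∞,∞]`. -/
theorem lim_I_mono (S : IntegralSystem X) (f g : ℕ → X → ℝ)
    (hfL : ∀ n, f n ∈ S.L) (hgL : ∀ n, g n ∈ S.L)
    (hfmono : ∀ n x, f n x ≤ f (n + 1) x) (hgmono : ∀ n x, g n x ≤ g (n + 1) x)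
    (F G : X → EReal)
    (hF : ∀ x, Tendsto (fun n => ((f n x : EReal))) atTop (𝓝 (F x)))
    (hG : ∀ x, Tendsto (fun n => ((g n x : EReal))) atTop (𝓝 (G x)))
    (hle : ∀ x, F x ≤ G x)
    (a b : EReal)
    (ha : Tendsto (fun n => ((S.I (f n) : EReal))) atTop (𝓝 a))
    (hb : Tendsto (fun n => ((S.I (g n) : EReal))) atTop (𝓝 b)) :
    a ≤ b := by
  have hfF (m : ℕ) (x : X) : (f m x : EReal) ≤ F x :=
    (monotone_nat_of_le_succ fun n => EReal.coe_le_coe_iff.2 (hfmono n x)).ge_of_tendsto (hF x) m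
  exact le_of_tendsto' ha fun m =>
    S.I_le_of_tendsto_of_le (hfL m) hgL (monotone_nat_of_le_succ hgmono) hG
      (fun x => (hfF m x).trans (hle x)) hb
end
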